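/- arXiv:1004.5239 — 3 statements merged into one kernel-verified Lean document; each statement's English description precedes it below -/
import Mathlib

section
/- Let K be a field of characteristic 0 and let UT_n be the group of n x n upper triangular matrices over K with all diagonal entries equal to 1. For any matrices A_1, ..., A_m, B in UT_n, the equation (A_1 X)(A_2 X)...(A_m X) = B has a unique solution X in UT_n. In particular, UT_n is a uniquely divisible group. -/
/-- A matrix is *unipotent* if it is upper triangular with all diagonal entries 1. -/
def Unipotent {K : Type*} [Field K] {n : ℕ} (M : Matrix (Fin n) (Fin n) K) : Prop :=
  (∀ i j : Fin n, j < i → M i j = 0) ∧ ∀ i : Fin n, M i i = 1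

/-!
Let `N` be a nilpotent non-unital subalgebra and write `P x = (a₁ x) ⋯ (aₘ x)`. Modulo
`N ^ (d + 1)`, a perturbation of `x ∈ 1 + N` by `z ∈ N ^ d`, `d ≥ 1`, changes each of the `m`
factors by `z`, and hence `P x` by `m z`. When `m` is invertible, the Newton-like map
`x ↦ x + m⁻¹ (b - P x)` therefore contracts the filtration by powers of `N`: any two of its
orbits in `1 + N` agree after finitely many steps, so it has exactly one fixed point there,
and its fixed points are the solutions of `P x = b`. Unipotent matrices are the case where `N`
consists of the strictly upper triangular ones.
-/

open Function Set

theorem existsUnique_isFixedPt_of_iterate_eq {α : Type*} {s : Set α} {f : α → α} {n : ℕ}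
    (hs : s.Nonempty) (hf : MapsTo f s s) (h : ∀ x ∈ s, ∀ y ∈ s, f^[n] x = f^[n] y) :
    ∃! x, x ∈ s ∧ IsFixedPt f x := by
  obtain ⟨x, hx⟩ := hs
  refine ⟨f^[n] x, ⟨hf.iterate n hx, ?_⟩, fun y ⟨hy, hfix⟩ => ?_⟩
  · rw [IsFixedPt, ← iterate_succ_apply' f, iterate_succ_apply]
    exact h _ (hf hx) _ hx
  · rw [← h y hy x hx, (hfix.iterate n).eq]

section OneAdd

variable {R A : Type*} [CommRing R] [Ring A] [Algebra R A]

/-- The multiplicative monoid `1 + N` of a non-unital subalgebra `N`, the abstract counterpart of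
the set of unipotent matrices. -/
def oneAdd (N : NonUnitalSubalgebra R A) : Submonoid A where
  carrier := {x | x - 1 ∈ N}
  one_mem' := by simp
  mul_mem' {x y} hx hy := by
    have expand : x * y - 1 = (x - 1) * (y - 1) + ((x - 1) + (y - 1)) := by noncomm_ring
    rw [mem_ofPred_eq, expand]
    exact add_mem (mul_mem hx hy) (add_mem hx hy)

variable {N : NonUnitalSubalgebra R A}

theorem mem_oneAdd_iff {x : A} : x ∈ oneAdd N ↔ x - 1 ∈ N := Iff.rfl

theorem sub_mem_of_mem_oneAdd {x y : A} (hx : x ∈ oneAdd N) (hy : y ∈ oneAdd N) : x - y ∈ N := by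
  simpa only [sub_sub_sub_cancel_right] using sub_mem (mem_oneAdd_iff.1 hx) (mem_oneAdd_iff.1 hy)

theorem add_mem_oneAdd {x z : A} (hx : x ∈ oneAdd N) (hz : z ∈ N) : x + z ∈ oneAdd N := by
  rw [mem_oneAdd_iff, add_sub_right_comm]
  exact add_mem hx hz

/- The exponents are shifted because `N ^ 0` is the submodule spanned by `1`, which need not
contain `N`. -/
theorem toSubmodule_pow_add_two_le (N : NonUnitalSubalgebra R A) (d : ℕ) :
    N.toSubmodule ^ (d + 2) ≤ N.toSubmodule ^ (d + 1) := by
  have mul_self_le : N.toSubmodule * N.toSubmodule ≤ N.toSubmodule :=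
    Submodule.mul_le.2 fun _ hx _ hy => N.mul_mem hx hy
  rw [pow_add, sq, pow_succ]
  exact mul_le_mul_right mul_self_le _

theorem mul_smodEq_right_of_mem_oneAdd {u z : A} {d : ℕ} (hu : u ∈ oneAdd N)
    (hz : z ∈ N.toSubmodule ^ d) : u * z ≡ z [SMOD N.toSubmodule ^ (d + 1)] := by
  rw [SModEq.sub_mem, ← sub_one_mul, pow_succ']
  exact Submodule.mul_mem_mul hu hz

theorem mul_smodEq_left_of_mem_oneAdd {u z : A} {d : ℕ} (hu : u ∈ oneAdd N)
    (hz : z ∈ N.toSubmodule ^ d) : z * u ≡ z [SMOD N.toSubmodule ^ (d + 1)] := by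
  rw [SModEq.sub_mem, ← mul_sub_one, pow_succ]
  exact Submodule.mul_mem_mul hz hu

theorem mul_sub_mul_smodEq {u u' v v' : A} {d : ℕ} (hu : u ∈ oneAdd N) (hv' : v' ∈ oneAdd N)
    (huu' : u - u' ∈ N.toSubmodule ^ d) (hvv' : v - v' ∈ N.toSubmodule ^ d) :
    u * v - u' * v' ≡ (u - u') + (v - v') [SMOD N.toSubmodule ^ (d + 1)] := by
  have telescope : u * v - u' * v' = (u - u') * v' + u * (v - v') := by noncomm_ring
  rw [telescope]
  exact (mul_smodEq_left_of_mem_oneAdd hv' huu').add (mul_smodEq_right_of_mem_oneAdd hu hvv')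

theorem prod_map_mul_mem_oneAdd {l : List A} {x : A} (hl : ∀ a ∈ l, a ∈ oneAdd N)
    (hx : x ∈ oneAdd N) : (l.map (· * x)).prod ∈ oneAdd N :=
  list_prod_mem (List.forall_mem_map.2 fun a ha => mul_mem (hl a ha) hx)

theorem prod_map_mul_sub_smodEq {l : List A} {x y : A} {d : ℕ} (hl : ∀ a ∈ l, a ∈ oneAdd N)
    (hx : x ∈ oneAdd N) (hy : y ∈ oneAdd N) (hxy : x - y ∈ N.toSubmodule ^ (d + 1)) :
    (l.map (· * x)).prod - (l.map (· * y)).prod ≡ (l.length : R) • (x - y)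
      [SMOD N.toSubmodule ^ (d + 2)] := by
  induction l with
  | nil => simp
  | cons a l ih =>
    obtain ⟨ha, hl⟩ := List.forall_mem_cons.1 hl
    have head : a * x - a * y ≡ x - y [SMOD N.toSubmodule ^ (d + 2)] := by
      simpa only [mul_sub] using mul_smodEq_right_of_mem_oneAdd ha hxy
    have mem_of_smodEq {w z : A} (h : w ≡ z [SMOD N.toSubmodule ^ (d + 2)])
        (hz : z ∈ N.toSubmodule ^ (d + 1)) : w ∈ N.toSubmodule ^ (d + 1) :=
      (Submodule.sub_mem_iff_left _ hz).1 (toSubmodule_pow_add_two_le N d (SModEq.sub_mem.1 h))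
    simp only [List.map_cons, List.prod_cons, List.length_cons, Nat.cast_succ]
    calc a * x * (l.map (· * x)).prod - a * y * (l.map (· * y)).prod
      _ ≡ (a * x - a * y) + ((l.map (· * x)).prod - (l.map (· * y)).prod)
          [SMOD N.toSubmodule ^ (d + 2)] :=
        mul_sub_mul_smodEq (mul_mem ha hx) (prod_map_mul_mem_oneAdd hl hy)
          (mem_of_smodEq head hxy) (mem_of_smodEq (ih hl) (Submodule.smul_mem _ _ hxy))
      _ ≡ (x - y) + (l.length : R) • (x - y) [SMOD N.toSubmodule ^ (d + 2)] := head.add (ih hl)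
      _ = ((l.length : R) + 1) • (x - y) := by rw [add_smul, one_smul, add_comm]

theorem existsUnique_isFixedPt_of_contracts (hN : IsNilpotent N.toSubmodule) {g : A → A}
    (hg : MapsTo g (oneAdd N) (oneAdd N))
    (hcontr : ∀ x ∈ oneAdd N, ∀ y ∈ oneAdd N, ∀ d : ℕ, x - y ∈ N.toSubmodule ^ (d + 1) →
      g x - g y ∈ N.toSubmodule ^ (d + 2)) :
    ∃! x, x ∈ oneAdd N ∧ IsFixedPt g x := by
  obtain ⟨n, hn⟩ := hN
  have iterate_sub_mem {x y : A} (hx : x ∈ oneAdd N) (hy : y ∈ oneAdd N) (d : ℕ) :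
      g^[d] x - g^[d] y ∈ N.toSubmodule ^ (d + 1) := by
    induction d with
    | zero => simpa using sub_mem_of_mem_oneAdd hx hy
    | succ d ih =>
      simpa only [iterate_succ_apply'] using
        hcontr _ (hg.iterate d hx) _ (hg.iterate d hy) d ih
  refine existsUnique_isFixedPt_of_iterate_eq (n := n) ⟨1, one_mem _⟩ hg fun x hx y hy => ?_
  simpa [pow_succ, hn, sub_eq_zero] using iterate_sub_mem hx hy n

theorem existsUnique_prod_map_mul_eq (hN : IsNilpotent N.toSubmodule) {l : List A} {b : A}
    (hlen : IsUnit (l.length : R)) (hl : ∀ a ∈ l, a ∈ oneAdd N) (hb : b ∈ oneAdd N) :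
    ∃! x, x ∈ oneAdd N ∧ (l.map (· * x)).prod = b := by
  obtain ⟨c, hc⟩ := hlen.exists_left_inv
  let P : A → A := fun x => (l.map (· * x)).prod
  let g : A → A := fun x => x + c • (b - P x)
  have isFixedPt_iff (x : A) : IsFixedPt g x ↔ P x = b := by
    rw [IsFixedPt, add_eq_left, (IsUnit.of_mul_eq_one _ hc).smul_eq_zero, sub_eq_zero, eq_comm]
  have mapsTo : MapsTo g (oneAdd N) (oneAdd N) := fun x hx =>
    add_mem_oneAdd hx
      (SMulMemClass.smul_mem c (sub_mem_of_mem_oneAdd hb (prod_map_mul_mem_oneAdd hl hx)))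
  suffices ∃! x, x ∈ oneAdd N ∧ IsFixedPt g x by simpa only [isFixedPt_iff] using this
  refine existsUnique_isFixedPt_of_contracts hN mapsTo fun x hx y hy d hxy => ?_
  have error : g x - g y = -c • (P x - P y - (l.length : R) • (x - y)) := by
    rw [smul_sub, smul_smul, neg_mul, hc]
    simp only [g]
    module
  rw [error]
  exact Submodule.smul_mem _ _ (SModEq.sub_mem.1 (prod_map_mul_sub_smodEq hl hx hy hxy))

theorem existsUnique_pow_eq (hN : IsNilpotent N.toSubmodule) {k : ℕ} (hk : IsUnit (k : R)) {b : A}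
    (hb : b ∈ oneAdd N) : ∃! x, x ∈ oneAdd N ∧ x ^ k = b := by
  simpa using existsUnique_prod_map_mul_eq (l := List.replicate k 1) hN (by simpa using hk)
    (fun _ ha => List.eq_of_mem_replicate ha ▸ one_mem _) hb

theorem stmt14_general (hN : IsNilpotent N.toSubmodule) {m : ℕ} (hm : IsUnit (m : R))
    {a : Fin m → A} {b : A} (ha : ∀ i, a i ∈ oneAdd N) (hb : b ∈ oneAdd N) :
    (∃! x, x ∈ oneAdd N ∧ (List.ofFn fun i => a i * x).prod = b) ∧
      ∀ k : ℕ, IsUnit (k : R) → ∃! x, x ∈ oneAdd N ∧ x ^ k = b := by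
  refine ⟨?_, fun k hk => existsUnique_pow_eq hN hk hb⟩
  simpa only [List.map_ofFn, comp_def] using
    existsUnique_prod_map_mul_eq (l := List.ofFn a) hN (by simpa using hm)
      (List.forall_mem_ofFn_iff.2 ha) hb

end OneAdd

section Superdiagonal

variable {ι : Type*} (R : Type*) [CommRing R]

/-- The matrices supported on and above the `d`-th block superdiagonal, where the index `i` lies in
the block numbered `b i`. As `d` varies they filter the block upper triangular matrices; the usual
superdiagonals of an `n × n` matrix are the case `b = Fin.val`. -/
def superdiagonal (b : ι → ℕ) (d : ℕ) : Submodule R (Matrix ι ι R) where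
  carrier := {M | ∀ i j, b j < b i + d → M i j = 0}
  zero_mem' _ _ _ := rfl
  add_mem' hM hM' i j hij := by simp [hM i j hij, hM' i j hij]
  smul_mem' c M hM i j hij := by simp [hM i j hij]

variable {R} {b : ι → ℕ} {d e : ℕ}

theorem superdiagonal_anti (h : d ≤ e) : superdiagonal R b e ≤ superdiagonal R b d :=
  fun _ hM i j hij => hM i j (by lia)

theorem superdiagonal_eq_bot (h : ∀ i, b i < d) : superdiagonal R b d = ⊥ :=
  (Submodule.eq_bot_iff _).2 fun _ hM => Matrix.ext fun i j => hM i j (by grind)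

variable [Fintype ι]

theorem mul_mem_superdiagonal {M M' : Matrix ι ι R} (hM : M ∈ superdiagonal R b d)
    (hM' : M' ∈ superdiagonal R b e) : M * M' ∈ superdiagonal R b (d + e) := by
  refine fun i j hij => (Matrix.mul_apply ..).trans (Finset.sum_eq_zero fun k _ => ?_)
  by_cases hik : b k < b i + d
  · rw [hM i k hik, zero_mul]
  · rw [hM' k j (by lia), mul_zero]

theorem superdiagonal_pow_le [DecidableEq ι] (n : ℕ) :
    superdiagonal R b d ^ n ≤ superdiagonal R b (n * d) := by
  induction n with
  | zero =>
    rw [pow_zero, zero_mul, Submodule.one_le]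
    exact fun i j hij => Matrix.one_apply_ne (by grind)
  | succ n ih =>
    rw [pow_succ, Nat.succ_mul]
    exact Submodule.mul_le.2 fun _ hM _ hM' => mul_mem_superdiagonal (ih hM) hM'

variable (R) in
/-- The strictly block upper triangular matrices, where the index `i` lies in the block numbered
`b i`: this is the nilpotent algebra `N` for which `1 + N` consists of the block unipotent
matrices. -/
def strictBlockTriangular (b : ι → ℕ) : NonUnitalSubalgebra R (Matrix ι ι R) :=
  { superdiagonal R b 1 with
    mul_mem' hM hM' := superdiagonal_anti one_le_two (mul_mem_superdiagonal hM hM') }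

theorem isNilpotent_strictBlockTriangular [DecidableEq ι] :
    IsNilpotent (strictBlockTriangular R b).toSubmodule := by
  obtain ⟨n, hn⟩ := (finite_range b).bddAbove
  refine ⟨n + 1, le_bot_iff.1 ?_⟩
  calc superdiagonal R b 1 ^ (n + 1)
    _ ≤ superdiagonal R b ((n + 1) * 1) := superdiagonal_pow_le _
    _ = ⊥ := superdiagonal_eq_bot fun i => by
      have := hn (mem_range_self i)
      lia

end Superdiagonal

theorem unipotent_iff_mem_oneAdd {K : Type*} [Field K] {n : ℕ} {M : Matrix (Fin n) (Fin n) K} :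
    Unipotent M ↔ M ∈ oneAdd (strictBlockTriangular K Fin.val) := by
  constructor
  · rintro ⟨hzero, hone⟩ i j hij
    rcases (Nat.lt_succ_iff.1 hij).lt_or_eq with hlt | heq
    · simp [hzero i j hlt, Matrix.one_apply_ne (Fin.ne_of_gt hlt)]
    · simp [Fin.ext heq, hone]
  · refine fun hM => ⟨fun i j hij => ?_, fun i => ?_⟩
    · simpa [Matrix.one_apply_ne hij.ne'] using hM i j (Nat.lt_succ_of_lt hij)
    · simpa [sub_eq_zero] using hM i i (Nat.lt_succ_self _)

/-- Over a field `K` of characteristic 0, for unipotent `A_1, …, A_m, B` (`m ≥ 1`),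
the equation `(A_1 X)(A_2 X) ⋯ (A_m X) = B` has a unique unipotent solution `X`;
in particular, the unipotent group `UT_n` is uniquely divisible. -/
theorem stmt14 (K : Type*) [Field K] [CharZero K] (n m : ℕ) (hm : 0 < m)
    (A : Fin m → Matrix (Fin n) (Fin n) K) (B : Matrix (Fin n) (Fin n) K)
    (hA : ∀ i, Unipotent (A i)) (hB : Unipotent B) :
    (∃! X : Matrix (Fin n) (Fin n) K,
        Unipotent X ∧ (List.ofFn fun i : Fin m => A i * X).prod = B) ∧
      ∀ k : ℕ, 0 < k →
        ∃! X : Matrix (Fin n) (Fin n) K, Unipotent X ∧ X ^ k = B := by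
  simp only [unipotent_iff_mem_oneAdd, Nat.pos_iff_ne_zero, ← Nat.cast_ne_zero (R := K),
    ← isUnit_iff_ne_zero] at *
  exact stmt14_general isNilpotent_strictBlockTriangular hm hA hB
end

section
/- Let (G_i)_{i >= 1} be a sequence of finite groups with the property that for every positive integer m, the integers m and |G_i| are relatively prime for all but finitely many i. Then the quotient of the direct product of the G_i by their direct sum (the normal subgroup of sequences with all but finitely many entries equal to the identity) is a uniquely divisible group. -/
/-!
Two sequences agree in the quotient exactly when they agree at all but finitely many indices, so a
power map that is bijective on all but finitely many factors is bijective on the quotient: roots are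
extracted coordinatewise, arbitrarily at the exceptional indices. On a finite group of order
coprime to `m` the map `x ↦ x ^ m` is bijective, since it has inverse `x ↦ x ^ k` for any `k` with
`k * m ≡ 1` modulo the order.
-/

/-- A group is *uniquely divisible* if every element has a unique `m`-th root
for each positive integer `m`. -/
def UniquelyDivisible (G : Type*) [Group G] : Prop :=
  ∀ (b : G) (m : ℕ), 0 < m → ∃! x : G, x ^ m = b

/-- The "direct sum" of a family of groups, as a subgroup of the direct product:
the sequences with all but finitely many entries equal to the identity. -/
def directSumSubgroup (G : ℕ → Type*) [∀ i, Group (G i)] : Subgroup (∀ i, G i) where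
  carrier := {f | {i | f i ≠ 1}.Finite}
  one_mem' := by
    simp
  mul_mem' := by
    intro f g hf hg
    apply (Set.Finite.union hf hg).subset
    intro i hi
    simp only [Set.mem_setOf_eq, Set.mem_union] at hi ⊢
    by_contra h
    push_neg at h
    exact hi (by simp [Pi.mul_apply, h.1, h.2])
  inv_mem' := by
    intro f hf
    apply hf.subset
    intro i hi
    simp only [Set.mem_setOf_eq] at hi ⊢
    intro h
    exact hi (by simp [Pi.inv_apply, h])

instance directSumSubgroup_normal (G : ℕ → Type*) [∀ i, Group (G i)] :
    (directSumSubgroup G).Normal := by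
  constructor
  intro f hf g
  apply Set.Finite.subset hf
  intro i hi
  simp only [Set.mem_setOf_eq] at hi ⊢
  intro h
  exact hi (by simp [Pi.mul_apply, Pi.inv_apply, h])

open Filter Function

theorem uniquelyDivisible_iff_bijective_pow {H : Type*} [Group H] :
    UniquelyDivisible H ↔ ∀ m : ℕ, 0 < m → Bijective (fun x : H ↦ x ^ m) := by
  simp only [UniquelyDivisible, bijective_iff_existsUnique]
  exact ⟨fun h m hm b ↦ h b m hm, fun h b m hm ↦ h m hm b⟩

section DirectSumQuotient

variable {G : ℕ → Type*} [∀ i, Group (G i)]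

theorem mem_directSumSubgroup_iff {f : ∀ i, G i} :
    f ∈ directSumSubgroup G ↔ ∀ᶠ i in cofinite, f i = 1 :=
  Iff.rfl

theorem mk_directSumSubgroup_eq_iff {f g : ∀ i, G i} :
    (f : (∀ i, G i) ⧸ directSumSubgroup G) = g ↔ ∀ᶠ i in cofinite, f i = g i := by
  simp only [QuotientGroup.eq, mem_directSumSubgroup_iff, Pi.mul_apply, Pi.inv_apply,
    inv_mul_eq_one]

theorem injective_pow_quotient_directSumSubgroup {m : ℕ}
    (h : ∀ᶠ i in cofinite, Injective (fun x : G i ↦ x ^ m)) :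
    Injective (fun x : (∀ i, G i) ⧸ directSumSubgroup G ↦ x ^ m) := by
  rintro ⟨f⟩ ⟨g⟩ hfg
  have hpow : ∀ᶠ i in cofinite, f i ^ m = g i ^ m := mk_directSumSubgroup_eq_iff.mp hfg
  refine mk_directSumSubgroup_eq_iff.mpr ?_
  filter_upwards [h, hpow] with i hinj hi using hinj hi

theorem surjective_pow_quotient_directSumSubgroup {m : ℕ}
    (h : ∀ᶠ i in cofinite, Surjective (fun x : G i ↦ x ^ m)) :
    Surjective (fun x : (∀ i, G i) ⧸ directSumSubgroup G ↦ x ^ m) := by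
  rintro ⟨b⟩
  let root : ∀ i, G i := fun i ↦ invFun (fun x : G i ↦ x ^ m) (b i)
  have hroot : ∀ᶠ i in cofinite, root i ^ m = b i := by
    filter_upwards [h] with i hsurj using invFun_eq (hsurj (b i))
  exact ⟨root, mk_directSumSubgroup_eq_iff.mpr hroot⟩

end DirectSumQuotient

theorem stmt15_general (G : ℕ → Type*) [∀ i, Group (G i)]
    (h : ∀ m : ℕ, 0 < m → ∀ᶠ i in cofinite, Bijective (fun x : G i ↦ x ^ m)) :
    UniquelyDivisible ((∀ i, G i) ⧸ directSumSubgroup G) :=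
  uniquelyDivisible_iff_bijective_pow.mpr fun m hm ↦
    ⟨injective_pow_quotient_directSumSubgroup ((h m hm).mono fun _ hi ↦ hi.injective),
      surjective_pow_quotient_directSumSubgroup ((h m hm).mono fun _ hi ↦ hi.surjective)⟩

/-- If `(G_i)` is a sequence of finite groups such that for every positive integer `m`,
`m` is coprime to `#G_i` for all but finitely many `i`, then the quotient of the direct
product of the `G_i` by their direct sum is uniquely divisible. -/
theorem stmt15 (G : ℕ → Type) [∀ i, Group (G i)] [∀ i, Finite (G i)]
    (h : ∀ m : ℕ, 0 < m → {i : ℕ | ¬ Nat.Coprime m (Nat.card (G i))}.Finite) :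
    UniquelyDivisible ((∀ i, G i) ⧸ directSumSubgroup G) :=
  stmt15_general G fun m hm ↦
    (eventually_cofinite.mpr (h m hm)).mono fun _ hi ↦ hi.symm.pow_left_bijective
end

section
/- Let k >= 1 and let n_0, ..., n_k be positive integers. The following are equivalent: (1) for every uniquely divisible group G and all elements A_1, ..., A_k, B in G, the equation X^{n_0} A_1 X^{n_1} A_2 ... X^{n_{k-1}} A_k X^{n_k} = B has a solution X in G; (2) k = 1 and n_0 = n_1. -/
/-!
A solution `X` of `X ^ m * A * X ^ m = B` comes from a square root: `(X ^ m * A) ^ 2 = B * A`.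

Conversely, let `p ≠ q` be positive. A monic complex polynomial whose roots all lie on the unit
circle has constant coefficient of norm `1`, while `∑_{i < p} x ^ i + ∑_{i < q} x ^ i` has constant
coefficient `2`, so this sum vanishes at some `x` off the unit circle. Let `t ∈ ℚ` act on `ℂ` as
multiplication by `x ^ t`. In `ℂ ⋊ ℚ` the `m`-th power of `(v, t)` is
`((∑_{i < m} x ^ (t i)) v, m t)`, and the scalar never vanishes, since `x ^ t` is not a root of
unity for `t ≠ 0`; hence the group is uniquely divisible. Every solution of
`X ^ p * (0, -p) * X ^ q = (b, q)` has the form `(v, 1)`, and comparing first coordinates yields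
`b = (∑_{i < p} x ^ i + ∑_{i < q} x ^ i) v = 0`. So `X ^ p * A * X ^ q = B` can be unsolvable.

With all `A_i` but one equal to `1`, solvability of the long equation therefore forces
`n_0 + ⋯ + n_j = n_{j+1} + ⋯ + n_k` for every `j < k`, which for positive `n_i` leaves only `k = 1`.
-/

section UniquelyDivisible

lemma UniquelyDivisible.exists_pow_mul_pow_eq {G : Type*} [Group G] (hG : UniquelyDivisible G)
    {m : ℕ} (hm : 0 < m) (A B : G) : ∃ X : G, X ^ m * A * X ^ m = B := by
  obtain ⟨C, hC, -⟩ := hG (B * A) 2 two_pos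
  obtain ⟨X, hX, -⟩ := hG (C * A⁻¹) m hm
  refine ⟨X, ?_⟩
  calc X ^ m * A * X ^ m = C ^ 2 * A⁻¹ := by rw [hX, pow_two]; group
    _ = B := by rw [hC, mul_inv_cancel_right]

lemma uniquelyDivisible_multiplicative (V : Type*) [AddCommGroup V] [Module ℚ V] :
    UniquelyDivisible (Multiplicative V) := by
  intro b m hm
  have hm' : (m : ℚ) ≠ 0 := by positivity
  refine ⟨.ofAdd ((m : ℚ)⁻¹ • b.toAdd), ?_, fun y hy => ?_⟩
  · change .ofAdd (m • (m : ℚ)⁻¹ • b.toAdd) = b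
    rw [← Nat.cast_smul_eq_nsmul ℚ, smul_inv_smul₀ hm', ofAdd_toAdd]
  · rw [← hy, toAdd_pow, ← Nat.cast_smul_eq_nsmul ℚ, inv_smul_smul₀ hm', ofAdd_toAdd]

end UniquelyDivisible

section SemidirectProduct

variable {N G : Type*}

lemma semidirectProduct_pow_right [Group N] [Group G] {φ : G →* MulAut N} (x : N ⋊[φ] G) (m : ℕ) :
    (x ^ m).right = x.right ^ m :=
  map_pow SemidirectProduct.rightHom x m

variable [CommGroup N]

lemma semidirectProduct_pow_left [Group G] {φ : G →* MulAut N} (x : N ⋊[φ] G) (m : ℕ) :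
    (x ^ m).left = ∏ i ∈ Finset.range m, (φ x.right ^ i) x.left := by
  induction m with
  | zero => simp
  | succ m ih =>
    rw [pow_succ, SemidirectProduct.mul_left, ih, semidirectProduct_pow_right, map_pow,
      Finset.prod_range_succ]

lemma UniquelyDivisible.semidirectProduct [Group G] {φ : G →* MulAut N} (hG : UniquelyDivisible G)
    (hφ : ∀ (g : G) (m : ℕ), 0 < m →
      Function.Bijective fun n : N => ∏ i ∈ Finset.range m, (φ g ^ i) n) :
    UniquelyDivisible (N ⋊[φ] G) := by
  intro b m hm
  obtain ⟨g, hg, g_unique⟩ := hG b.right m hm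
  obtain ⟨n, hn, n_unique⟩ := (hφ g m hm).existsUnique b.left
  refine ⟨⟨n, g⟩, ?_, ?_⟩
  · ext
    · rw [semidirectProduct_pow_left, hn]
    · rw [semidirectProduct_pow_right, hg]
  · rintro ⟨n', g'⟩ rfl
    obtain rfl : g' = g := g_unique g' (semidirectProduct_pow_right ⟨n', g'⟩ m).symm
    obtain rfl : n' = n := n_unique n' (semidirectProduct_pow_left ⟨n', g'⟩ m).symm
    rfl

lemma pow_mul_inr_mul_pow_ne [CommGroup G] [IsMulTorsionFree G] {φ : G →* MulAut N} {p q : ℕ}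
    (hpq : p + q ≠ 0) {g : G}
    (hg : ∀ n : N, (∏ i ∈ Finset.range p, (φ g ^ i) n) * ∏ i ∈ Finset.range q, (φ g ^ i) n = 1)
    {b : N} (hb : b ≠ 1) (X : N ⋊[φ] G) :
    X ^ p * .inr (g ^ p)⁻¹ * X ^ q ≠ .inl b * .inr (g ^ q) := by
  intro hX
  have X_right : X.right = g := by
    have h : X.right ^ p * (g ^ p)⁻¹ * X.right ^ q = g ^ q := by
      simpa [semidirectProduct_pow_right] using congrArg SemidirectProduct.right hX
    refine pow_left_injective hpq ?_
    calc X.right ^ (p + q) = X.right ^ p * (g ^ p)⁻¹ * X.right ^ q * g ^ p := by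
          rw [pow_add, mul_right_comm, inv_mul_cancel_right]
      _ = g ^ (p + q) := by rw [h, ← pow_add, add_comm]
  apply hb
  calc b = (X ^ p * .inr (g ^ p)⁻¹ * X ^ q).left := by
          rw [hX]
          simp [-map_pow]
    _ = (X ^ p).left * (X ^ q).left := by
          simp [semidirectProduct_pow_right, X_right, -map_inv, -map_pow]
    _ = 1 := by rw [semidirectProduct_pow_left, semidirectProduct_pow_left, X_right, hg]

end SemidirectProduct

section Scaling

variable {G R V : Type*} [Group G] [Semiring R] [AddCommGroup V] [Module R V]

variable (V) in
/-- The action of `G` on the additive group of `V`, written multiplicatively as required by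
`SemidirectProduct`, in which `g` scales by the value `χ g` of a character `χ`. -/
def scalingAut (χ : G →* Rˣ) : G →* MulAut (Multiplicative V) :=
  (MulAutMultiplicative V).symm.toMonoidHom.comp ((DistribMulAction.toAddAut Rˣ V).comp χ)

lemma scalingAut_apply (χ : G →* Rˣ) (g : G) (v : Multiplicative V) :
    scalingAut V χ g v = .ofAdd ((χ g : R) • v.toAdd) :=
  rfl

lemma prod_scalingAut_pow_apply (χ : G →* Rˣ) (g : G) (m : ℕ) (v : Multiplicative V) :
    ∏ i ∈ Finset.range m, (scalingAut V χ g ^ i) v =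
      .ofAdd ((∑ i ∈ Finset.range m, (χ g : R) ^ i) • v.toAdd) := by
  simp only [← map_pow, scalingAut_apply, Finset.sum_smul, ofAdd_sum]
  simp only [map_pow, Units.val_pow_eq_pow_val]

lemma UniquelyDivisible.semidirectProduct_scalingAut {K : Type*} [DivisionRing K]
    [Module K V] (hG : UniquelyDivisible G) {χ : G →* Kˣ}
    (hχ : ∀ (g : G) (m : ℕ), 0 < m → ∑ i ∈ Finset.range m, (χ g : K) ^ i ≠ 0) :
    UniquelyDivisible (Multiplicative V ⋊[scalingAut V χ] G) := by
  refine hG.semidirectProduct fun g m hm => ?_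
  simp only [prod_scalingAut_pow_apply]
  exact Multiplicative.ofAdd.bijective.comp
    ((MulAction.bijective₀ (hχ g m hm)).comp Multiplicative.toAdd.bijective)

lemma exists_forall_pow_mul_pow_ne {H : Type*} [CommGroup H] [IsMulTorsionFree H] [Nontrivial V]
    {χ : H →* Rˣ} {g : H} {p q : ℕ} (hpq : p + q ≠ 0)
    (hg : ∑ i ∈ Finset.range p, (χ g : R) ^ i + ∑ i ∈ Finset.range q, (χ g : R) ^ i = 0) :
    ∃ A B : Multiplicative V ⋊[scalingAut V χ] H, ∀ X, X ^ p * A * X ^ q ≠ B := by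
  obtain ⟨b, hb⟩ := exists_ne (1 : Multiplicative V)
  refine ⟨_, _, pow_mul_inr_mul_pow_ne hpq (g := g) (fun v => ?_) hb⟩
  rw [prod_scalingAut_pow_apply, prod_scalingAut_pow_apply, ← ofAdd_add, ← add_smul, hg, zero_smul,
    ofAdd_zero]

end Scaling

section Roots

lemma geom_sum_ne_zero_of_norm_ne_one {K : Type*} [NormedDivisionRing K] {x : K} (hx : ‖x‖ ≠ 1)
    {m : ℕ} (hm : m ≠ 0) : ∑ i ∈ Finset.range m, x ^ i ≠ 0 := by
  intro h
  have x_pow : x ^ m = 1 := by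
    rw [← sub_eq_zero, ← mul_geom_sum, h, mul_zero]
  have norm_x_pow : ‖x‖ ^ m = 1 := by rw [← norm_pow, x_pow, norm_one]
  exact hx ((pow_eq_one_iff_of_nonneg (norm_nonneg x) hm).1 norm_x_pow)

open Polynomial

lemma degree_geom_sum_X_lt (R : Type*) [Semiring R] (m : ℕ) :
    (∑ i ∈ Finset.range m, (X : R[X]) ^ i).degree < m := by
  rw [← mem_degreeLT]
  refine Submodule.sum_mem _ fun i hi => mem_degreeLT.2 ?_
  exact (degree_X_pow_le i).trans_lt (by exact_mod_cast Finset.mem_range.1 hi)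

lemma monic_geom_sum_X_add_geom_sum_X (R : Type*) [Semiring R] {p q : ℕ} (h : p < q) :
    (∑ i ∈ Finset.range p, (X : R[X]) ^ i + ∑ i ∈ Finset.range q, X ^ i).Monic := by
  obtain ⟨r, rfl⟩ := Nat.exists_eq_add_one_of_ne_zero (Nat.ne_zero_of_lt h)
  rw [Finset.sum_range_succ, ← add_assoc, add_comm]
  refine monic_X_pow_add ((degree_add_le _ _).trans_lt (max_lt ?_ (degree_geom_sum_X_lt R r)))
  exact (degree_geom_sum_X_lt R p).trans_le (by exact_mod_cast Nat.le_of_lt_succ h)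

lemma exists_isRoot_norm_ne_one {K : Type*} [NormedField K] {f : K[X]} (hf : f.Splits)
    (hm : f.Monic) (h0 : ‖f.coeff 0‖ ≠ 1) : ∃ x, f.IsRoot x ∧ ‖x‖ ≠ 1 := by
  contrapose! h0
  have norm_prod_roots : ‖f.roots.prod‖ = 1 := by
    rw [← normHom_apply, map_multiset_prod]
    refine Multiset.prod_eq_one fun y hy => ?_
    obtain ⟨x, hx, rfl⟩ := Multiset.mem_map.1 hy
    exact h0 x (isRoot_of_mem_roots hx)
  rw [hf.coeff_zero_eq_prod_roots_of_monic hm, norm_mul, norm_pow, norm_neg, norm_one, one_pow,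
    one_mul, norm_prod_roots]

lemma exists_geom_sum_add_geom_sum_eq_zero {K : Type*} [NormedField K] [IsAlgClosed K]
    (h2 : ‖(2 : K)‖ ≠ 1) {p q : ℕ} (hp : p ≠ 0) (hq : q ≠ 0) (hpq : p ≠ q) :
    ∃ x : K, ‖x‖ ≠ 1 ∧ ∑ i ∈ Finset.range p, x ^ i + ∑ i ∈ Finset.range q, x ^ i = 0 := by
  wlog h : p < q generalizing p q
  · simpa only [add_comm] using this hq hp hpq.symm (by lia)
  set f : K[X] := ∑ i ∈ Finset.range p, X ^ i + ∑ i ∈ Finset.range q, X ^ i with hf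
  have eval_f (x : K) :
      f.eval x = ∑ i ∈ Finset.range p, x ^ i + ∑ i ∈ Finset.range q, x ^ i := by
    simp only [hf, eval_add, eval_geom_sum]
  have coeff_zero : f.coeff 0 = 2 := by
    rw [coeff_zero_eq_eval_zero, eval_f, zero_geom_sum, zero_geom_sum, if_neg hp, if_neg hq,
      one_add_one_eq_two]
  obtain ⟨x, hx, hx1⟩ := exists_isRoot_norm_ne_one (IsAlgClosed.splits f)
    (monic_geom_sum_X_add_geom_sum_X K h) (coeff_zero ▸ h2)
  exact ⟨x, hx1, eval_f x ▸ hx⟩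

end Roots

section RationalPowers

/-- The character `t ↦ x ^ t` of the additive group of rationals, for the principal branch of the
complex power. -/
noncomputable def ratPowHom (x : ℂˣ) : Multiplicative ℚ →* ℂˣ :=
  MonoidHom.toHomUnits
    { toFun t := (x : ℂ) ^ (t.toAdd : ℂ)
      map_one' := by simp
      map_mul' s t := by simp [Complex.cpow_add _ _ x.ne_zero] }

lemma coe_ratPowHom (x : ℂˣ) (t : Multiplicative ℚ) :
    (ratPowHom x t : ℂ) = (x : ℂ) ^ (t.toAdd : ℂ) :=
  rfl

lemma norm_ratPowHom (x : ℂˣ) (t : Multiplicative ℚ) :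
    ‖(ratPowHom x t : ℂ)‖ = ‖(x : ℂ)‖ ^ (t.toAdd : ℝ) := by
  rw [coe_ratPowHom, ← Complex.norm_cpow_real, Complex.ofReal_ratCast]

lemma geom_sum_ratPowHom_ne_zero {x : ℂˣ} (hx : ‖(x : ℂ)‖ ≠ 1) (t : Multiplicative ℚ) {m : ℕ}
    (hm : m ≠ 0) : ∑ i ∈ Finset.range m, (ratPowHom x t : ℂ) ^ i ≠ 0 := by
  by_cases ht : t = 1
  · simpa [ht] using hm
  · refine geom_sum_ne_zero_of_norm_ne_one ?_ hm
    rw [norm_ratPowHom, ← Real.rpow_zero ‖(x : ℂ)‖, Ne,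
      Real.rpow_right_inj (norm_pos_iff.2 x.ne_zero) hx]
    simpa using ht

end RationalPowers

lemma exists_uniquelyDivisible_forall_pow_mul_pow_ne.{u} {p q : ℕ} (hp : p ≠ 0) (hq : q ≠ 0)
    (hpq : p ≠ q) : ∃ (G : Type u) (_ : Group G), UniquelyDivisible G ∧
      ∃ A B : G, ∀ X : G, X ^ p * A * X ^ q ≠ B := by
  obtain ⟨x, hx, hsum⟩ :=
    exists_geom_sum_add_geom_sum_eq_zero (K := ℂ) (by norm_num) hp hq hpq
  have x_ne_zero : x ≠ 0 := by
    rintro rfl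
    simp [zero_geom_sum, hp, hq] at hsum
  lift x to ℂˣ using x_ne_zero.isUnit
  have ratPowHom_one : (ratPowHom x (.ofAdd 1) : ℂ) = x := by simp [coe_ratPowHom]
  exact ⟨Multiplicative (ULift.{u} ℂ) ⋊[scalingAut (ULift.{u} ℂ) (ratPowHom x)] Multiplicative ℚ,
    inferInstance,
    (uniquelyDivisible_multiplicative ℚ).semidirectProduct_scalingAut fun t m hm =>
      geom_sum_ratPowHom_ne_zero hx t hm.ne',
    exists_forall_pow_mul_pow_ne (by lia) (ratPowHom_one.symm ▸ hsum)⟩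

section InitialSums

variable {α : Type*} [AddCommMonoid α]

lemma sum_Iic_zero {k : ℕ} (f : Fin (k + 1) → α) : ∑ i ≤ 0, f i = f 0 := by
  rw [← bot_eq_zero, Finset.Iic_bot, Finset.sum_singleton]

lemma sum_Iic_succ {k : ℕ} (f : Fin (k + 1) → α) (j : Fin k) :
    ∑ i ≤ j.succ, f i = f 0 + ∑ i ≤ j, f i.succ := by
  rw [← Finset.Icc_bot, ← Finset.add_sum_Ioc_eq_sum_Icc bot_le,
    bot_eq_zero, ← Fin.map_succEmb_Iic, Finset.sum_map]
  rfl

lemma sum_Iic_add_sum_Ioi {ι : Type*} [Fintype ι] [LinearOrder ι] [LocallyFiniteOrderBot ι]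
    [LocallyFiniteOrderTop ι] (f : ι → α) (j : ι) :
    ∑ i ≤ j, f i + ∑ i > j, f i = ∑ i, f i := by
  rw [← Finset.sum_add_sum_compl (Finset.Iic j)]
  congr 2
  ext i
  simp

lemma strictMono_sum_Iic [PartialOrder α] [IsOrderedCancelAddMonoid α] {ι : Type*}
    [Preorder ι] [LocallyFiniteOrderBot ι] {f : ι → α} (hf : ∀ i, 0 < f i) :
    StrictMono fun j => ∑ i ≤ j, f i := fun j l hjl =>
  Finset.sum_lt_sum_of_subset (Finset.Iic_subset_Iic.2 hjl.le) (Finset.mem_Iic.2 le_rfl)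
    (by simpa using hjl.not_ge) (hf l) fun i _ _ => (hf i).le

end InitialSums

section PowerWord

variable {M : Type*} [Monoid M]

/-- The left-hand side `X ^ n 0 * A 0 * X ^ n 1 * A 1 * ⋯ * A (k - 1) * X ^ n k` of the equation;
the coefficient called `A_i` in the informal statement is `A (i - 1)`. -/
def powerWord {k : ℕ} (n : Fin (k + 1) → ℕ) (A : Fin k → M) (X : M) : M :=
  X ^ n 0 * (List.ofFn fun i : Fin k => A i * X ^ n i.succ).prod

lemma powerWord_succ {k : ℕ} (n : Fin (k + 2) → ℕ) (A : Fin (k + 1) → M) (X : M) :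
    powerWord n A X =
      X ^ n 0 * A 0 * powerWord (fun i => n i.succ) (fun i => A i.succ) X := by
  simp only [powerWord, List.ofFn_succ, List.prod_cons, mul_assoc]

lemma powerWord_one {k : ℕ} (n : Fin (k + 1) → ℕ) (X : M) :
    powerWord n 1 X = X ^ ∑ i, n i := by
  induction k with
  | zero => simp [powerWord]
  | succ k ih =>
    rw [powerWord_succ, Fin.sum_univ_succ, pow_add, ← ih, Pi.one_apply, mul_one]
    rfl

lemma powerWord_mulSingle {k : ℕ} (n : Fin (k + 1) → ℕ) (j : Fin k) (a X : M) :
    powerWord n (Pi.mulSingle j a) X =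
      X ^ (∑ i ≤ j.castSucc, n i) * a * X ^ (∑ i > j.castSucc, n i) := by
  induction k with
  | zero => exact j.elim0
  | succ k ih =>
    rw [powerWord_succ]
    cases j using Fin.cases with
    | zero =>
      have tail_eq_one : (fun i : Fin k => Pi.mulSingle (M := fun _ => M) 0 a i.succ) = 1 := by
        ext i
        simp
      rw [tail_eq_one, powerWord_one, Pi.mulSingle_eq_same, Fin.castSucc_zero, sum_Iic_zero,
        Fin.sum_Ioi_zero]
    | succ j =>
      have tail_eq_mulSingle : (fun i : Fin k => Pi.mulSingle (M := fun _ => M) j.succ a i.succ) =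
          Pi.mulSingle j a := by
        ext i
        simp [Pi.mulSingle_apply]
      rw [tail_eq_mulSingle, ih, ← Fin.succ_castSucc, sum_Iic_succ, Fin.sum_Ioi_succ,
        pow_add]
      simp [mul_assoc]

end PowerWord

lemma eq_one_and_eq_of_forall_sum_Iic_eq_sum_Ioi {k : ℕ} (hk : 1 ≤ k) {n : Fin (k + 1) → ℕ}
    (hn : ∀ i, 0 < n i)
    (h : ∀ j : Fin k, ∑ i ≤ j.castSucc, n i = ∑ i > j.castSucc, n i) :
    k = 1 ∧ n 0 = n 1 := by
  have two_mul_sum_Iic (j : Fin k) : 2 * ∑ i ≤ j.castSucc, n i = ∑ i, n i := by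
    rw [← sum_Iic_add_sum_Ioi n j.castSucc, two_mul, ← h j]
  have subsingleton_fin : Subsingleton (Fin k) := ⟨fun j l =>
    Fin.castSucc_injective k ((strictMono_sum_Iic hn).injective
      (by have := two_mul_sum_Iic j; have := two_mul_sum_Iic l; lia))⟩
  obtain rfl : k = 1 := le_antisymm (Fin.subsingleton_iff_le_one.1 subsingleton_fin) hk
  exact ⟨rfl, by simpa [sum_Iic_zero, Fin.sum_Ioi_zero] using h 0⟩

/-- For `k ≥ 1` and positive integers `n_0, …, n_k`, the equation
`X^{n_0} A_1 X^{n_1} A_2 ⋯ X^{n_{k-1}} A_k X^{n_k} = B` has a solution in every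
uniquely divisible group (for all choices of `A_1, …, A_k, B`) if and only if
`k = 1` and `n_0 = n_1`. -/
theorem stmt17 (k : ℕ) (hk : 1 ≤ k) (n : Fin (k + 1) → ℕ) (hn : ∀ i, 0 < n i) :
    (∀ (G : Type u) (_ : Group G), UniquelyDivisible G →
        ∀ (A : Fin k → G) (B : G),
          ∃ X : G,
            X ^ n 0 * (List.ofFn fun i : Fin k => A i * X ^ n i.succ).prod = B) ↔
      (k = 1 ∧ n 0 = n 1) := by
  constructor
  · intro H
    refine eq_one_and_eq_of_forall_sum_Iic_eq_sum_Ioi hk hn fun j => ?_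
    by_contra hne
    have left_ne_zero : ∑ i ≤ j.castSucc, n i ≠ 0 :=
      (Finset.sum_pos (fun i _ => hn i) ⟨_, Finset.mem_Iic.2 le_rfl⟩).ne'
    have right_ne_zero : ∑ i > j.castSucc, n i ≠ 0 :=
      (Finset.sum_pos (fun i _ => hn i) ⟨_, Finset.mem_Ioi.2 j.castSucc_lt_succ⟩).ne'
    obtain ⟨G, _, hG, a, B, hB⟩ :=
      exists_uniquelyDivisible_forall_pow_mul_pow_ne left_ne_zero right_ne_zero hne
    obtain ⟨X, hX⟩ := H G _ hG (Pi.mulSingle j a) B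
    exact hB X ((powerWord_mulSingle n j a X).symm.trans hX)
  · rintro ⟨rfl, h⟩ G _ hG A B
    obtain ⟨X, hX⟩ := hG.exists_pow_mul_pow_eq (hn 0) (A 0) B
    refine ⟨X, ?_⟩
    simpa [← h, ← mul_assoc] using hX
end
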